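/- Let A, B ∈ ℝ^{p×p} be symmetric with B positive definite and A positive semidefinite, and let 0 < q_1 < ... < q_d < p be a signature. Define f(ρ) = Σ_{k=1}^d Σ_{j=1}^{q_k} λ_j(A − ρB), where λ_1(M) ≥ ... ≥ λ_p(M) are the decreasingly sorted eigenvalues of a symmetric matrix M. Then f admits a unique root: there exists exactly one ρ* ∈ ℝ such that f(ρ*) = 0. -/

import Mathlib

open Matrix Finset

/-- `μ` is the decreasingly sorted spectrum of the (symmetric) matrix `M`:
`μ 0 ≥ μ 1 ≥ ⋯ ≥ μ (p-1)` and `M = V diag(μ) Vᵀ` for some orthogonal `V`. -/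
def IsSortedSpectrum {p : ℕ} (M : Matrix (Fin p) (Fin p) ℝ) (μ : Fin p → ℝ) : Prop :=
  (∀ i j : Fin p, i ≤ j → μ j ≤ μ i) ∧
  ∃ V : Matrix (Fin p) (Fin p) ℝ, Vᵀ * V = 1 ∧ M = V * Matrix.diagonal μ * Vᵀ

lemma exists_sorted {p : ℕ} (M : Matrix (Fin p) (Fin p) ℝ) (hM : M.IsHermitian) :
    ∃ μ, IsSortedSpectrum M μ := by
  let σ := Tuple.sort (fun i => - hM.eigenvalues i)
  have hσ : Monotone ((fun i => - hM.eigenvalues i) ∘ σ) := Tuple.monotone_sort _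
  let U : Matrix (Fin p) (Fin p) ℝ := hM.eigenvectorUnitary
  have hU : Uᵀ * U = 1 := by
    have := (Matrix.mem_unitaryGroup_iff').1 hM.eigenvectorUnitary.2
    simpa [star_eq_conjTranspose] using this
  have hs : M = U * diagonal hM.eigenvalues * Uᵀ := by
    have := hM.spectral_theorem
    rw [Unitary.conjStarAlgAut_apply] at this
    simpa [star_eq_conjTranspose, Function.comp_def] using this
  refine ⟨hM.eigenvalues ∘ σ, fun i j hij => ?_, U.submatrix id σ, ?_, ?_⟩
  · have := hσ hij
    simpa using this
  · rw [transpose_submatrix, ← submatrix_mul _ _ _ _ _ Function.bijective_id, hU]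
    simp
  · have hd : diagonal (hM.eigenvalues ∘ σ) = (diagonal hM.eigenvalues).submatrix σ σ := by
      rw [submatrix_diagonal_equiv]
    rw [hd, transpose_submatrix, ← submatrix_mul _ _ _ _ _ σ.bijective,
      ← submatrix_mul _ _ _ _ _ σ.bijective, ← hs]
    simp

lemma diag_entry {p : ℕ} (Q : Matrix (Fin p) (Fin p) ℝ) (μ : Fin p → ℝ) (j : Fin p) :
    (Qᵀ * diagonal μ * Q) j j = ∑ i, (Q i j)^2 * μ i := by
  rw [mul_apply]
  refine Finset.sum_congr rfl fun i _ => ?_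
  rw [mul_diagonal, transpose_apply]; ring

lemma kyfan {p : ℕ} (M : Matrix (Fin p) (Fin p) ℝ) (μ : Fin p → ℝ) (h : IsSortedSpectrum M μ)
    (V : Matrix (Fin p) (Fin p) ℝ) (hV : Vᵀ * V = 1) (m : ℕ) (hm : m < p) :
    ∑ j ∈ univ.filter (fun j : Fin p => (j : ℕ) < m), (Vᵀ * M * V) j j ≤
      ∑ j ∈ univ.filter (fun j : Fin p => (j : ℕ) < m), μ j := by
  obtain ⟨hμ, W, hW, rfl⟩ := h
  set Q := Wᵀ * V with hQ
  have hV' : V * Vᵀ = 1 := mul_eq_one_comm.1 hV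
  have hW' : W * Wᵀ = 1 := mul_eq_one_comm.1 hW
  have e : Vᵀ * (W * diagonal μ * Wᵀ) * V = Qᵀ * diagonal μ * Q := by
    simp [hQ, Matrix.mul_assoc]
  have h1 : Qᵀ * Q = 1 := by
    rw [hQ, transpose_mul, transpose_transpose, Matrix.mul_assoc, ← Matrix.mul_assoc W, hW',
      Matrix.one_mul, hV]
  have h2 : Q * Qᵀ = 1 := mul_eq_one_comm.1 h1
  have col : ∀ j, ∑ i, (Q i j)^2 = 1 := fun j => by
    have := congrFun (congrFun h1 j) j
    rw [mul_apply, one_apply_eq] at this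
    simpa [pow_two] using this
  have row : ∀ i, ∑ j, (Q i j)^2 = 1 := fun i => by
    have := congrFun (congrFun h2 i) i
    rw [mul_apply, one_apply_eq] at this
    simpa [pow_two] using this
  rw [e]
  simp_rw [diag_entry]
  set s := univ.filter (fun j : Fin p => (j : ℕ) < m)
  set c := μ ⟨m, hm⟩
  -- shift by c
  have l1 : ∑ j ∈ s, ∑ i, (Q i j)^2 * μ i = ∑ j ∈ s, c + ∑ i, (∑ j ∈ s, (Q i j)^2) * (μ i - c) := by
    simp_rw [Finset.sum_mul]
    rw [Finset.sum_comm (s := univ), ← Finset.sum_add_distrib]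
    refine Finset.sum_congr rfl fun j _ => ?_
    simp_rw [mul_sub, Finset.sum_sub_distrib, ← Finset.sum_mul, col]
    ring
  have l2 : ∑ j ∈ s, μ j = ∑ j ∈ s, c + ∑ i : Fin p, (if (i : ℕ) < m then μ i - c else 0) := by
    rw [← Finset.sum_filter, ← Finset.sum_add_distrib]
    refine Finset.sum_congr rfl fun j _ => by ring
  rw [l1, l2]
  gcongr with i
  have t0 : 0 ≤ ∑ j ∈ s, (Q i j)^2 := Finset.sum_nonneg fun _ _ => sq_nonneg _
  have t1 : ∑ j ∈ s, (Q i j)^2 ≤ 1 := by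
    rw [← row i]
    exact Finset.sum_le_sum_of_subset_of_nonneg (Finset.subset_univ _) fun _ _ _ => sq_nonneg _
  split_ifs with hi
  · have : c ≤ μ i := hμ _ _ (Fin.le_def.2 hi.le)
    nlinarith
  · have : μ i ≤ c := hμ _ _ (Fin.le_def.2 (not_lt.1 hi))
    nlinarith

def trL {p : ℕ} (d : ℕ) (q : ℕ → ℕ) (V M : Matrix (Fin p) (Fin p) ℝ) : ℝ :=
  ∑ k ∈ Finset.Icc 1 d, ∑ j ∈ Finset.univ.filter (fun j : Fin p => (j : ℕ) < q k), (Vᵀ * M * V) j j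

def trF {p : ℕ} (d : ℕ) (q : ℕ → ℕ) (μ : Fin p → ℝ) : ℝ :=
  ∑ k ∈ Finset.Icc 1 d, ∑ j ∈ Finset.univ.filter (fun j : Fin p => (j : ℕ) < q k), μ j

lemma trL_sub {p : ℕ} (d : ℕ) (q : ℕ → ℕ) (V A B : Matrix (Fin p) (Fin p) ℝ) (r : ℝ) :
    trL d q V (A - r • B) = trL d q V A - r * trL d q V B := by
  simp [trL, Matrix.mul_sub, Matrix.sub_mul, Finset.mul_sum]

lemma trL_neg {p : ℕ} (d : ℕ) (q : ℕ → ℕ) (V B : Matrix (Fin p) (Fin p) ℝ) :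
    trL d q V (-B) = - trL d q V B := by
  simp [trL]

lemma trL_le {p : ℕ} (d : ℕ) (q : ℕ → ℕ) (hq : ∀ k ∈ Finset.Icc 1 d, q k < p)
    (V M : Matrix (Fin p) (Fin p) ℝ) (hV : Vᵀ * V = 1) (μ) (h : IsSortedSpectrum M μ) :
    trL d q V M ≤ trF d q μ :=
  Finset.sum_le_sum fun k hk => kyfan M μ h V hV _ (hq k hk)

lemma trL_eq {p : ℕ} (d : ℕ) (q : ℕ → ℕ)
    (M : Matrix (Fin p) (Fin p) ℝ) (μ) (h : IsSortedSpectrum M μ) :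
    ∃ V : Matrix (Fin p) (Fin p) ℝ, Vᵀ * V = 1 ∧ trF d q μ = trL d q V M := by
  obtain ⟨_, V, hV, rfl⟩ := h
  refine ⟨V, hV, ?_⟩
  have : Vᵀ * (V * diagonal μ * Vᵀ) * V = diagonal μ := by
    rw [Matrix.mul_assoc, Matrix.mul_assoc, hV, ← Matrix.mul_assoc, ← Matrix.mul_assoc, hV]; simp
  simp [trL, trF, this]

theorem trace_ratio_newton_function_unique_root
    {p d : ℕ} (hd : 1 ≤ d)
    (q : ℕ → ℕ) (hq1 : 0 < q 1)
    (hmono : ∀ k, 1 ≤ k → k < d → q k < q (k + 1)) (hqd : q d < p)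
    (A B : Matrix (Fin p) (Fin p) ℝ)
    (hA : A.PosSemidef) (hB : B.PosDef) :
    ∃! ρ : ℝ, ∀ μ : Fin p → ℝ, IsSortedSpectrum (A - ρ • B) μ →
      ∑ k ∈ Finset.Icc 1 d,
        ∑ j ∈ Finset.univ.filter (fun j : Fin p => (j : ℕ) < q k), μ j = 0 := by
  have hq : ∀ k ∈ Finset.Icc 1 d, q k < p := by
    intro k hk
    obtain ⟨h1, h2⟩ := Finset.mem_Icc.1 hk
    refine lt_of_le_of_lt ?_ hqd
    clear hk hqd
    induction d, h2 using Nat.le_induction with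
    | base => exact le_rfl
    | succ n hn ih =>
      exact (ih (by omega) (fun k a b => hmono k a (by omega))).trans
        (hmono n (by omega) (by omega)).le
  have hp : 0 < p := by omega
  have hherm : ∀ r : ℝ, (A - r • B).IsHermitian := fun r => by
    refine hA.1.sub ?_
    have := hB.1
    unfold Matrix.IsHermitian at *
    rw [conjTranspose_smul, this, star_trivial]
  have hLA : ∀ V : Matrix (Fin p) (Fin p) ℝ, 0 ≤ trL d q V A := fun V => by
    have := hA.conjTranspose_mul_mul_same V
    rw [conjTranspose_eq_transpose_of_trivial] at this
    exact Finset.sum_nonneg fun k _ => Finset.sum_nonneg fun j _ => this.diag_nonneg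
  have hLB : ∀ V : Matrix (Fin p) (Fin p) ℝ, Vᵀ * V = 1 → 0 < trL d q V B := fun V hV => by
    have hinj : Function.Injective V.mulVec := by
      intro x y hxy
      have := congrArg (Vᵀ *ᵥ ·) hxy
      simpa [hV] using this
    have := hB.conjTranspose_mul_mul_same hinj
    rw [conjTranspose_eq_transpose_of_trivial] at this
    refine Finset.sum_pos' (fun k _ => Finset.sum_nonneg fun j _ => this.diag_pos.le)
      ⟨1, by simp [hd], Finset.sum_pos (fun j _ => this.diag_pos) ⟨⟨0, hp⟩, by simp [hq1]⟩⟩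
  choose μ hμ using fun r => exists_sorted _ (hherm r)
  set f : ℝ → ℝ := fun r => trF d q (μ r) with hf
  have hle : ∀ r V, Vᵀ * V = 1 → trL d q V A - r * trL d q V B ≤ f r := fun r V hV => by
    rw [← trL_sub]; exact trL_le d q hq V _ hV _ (hμ r)
  have heq : ∀ r, ∃ V : Matrix (Fin p) (Fin p) ℝ,
      Vᵀ * V = 1 ∧ f r = trL d q V A - r * trL d q V B := fun r => by
    obtain ⟨V, hV, h⟩ := trL_eq d q _ _ (hμ r)
    exact ⟨V, hV, by rw [← trL_sub]; exact h⟩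
  have huniq : ∀ r ν, IsSortedSpectrum (A - r • B) ν → trF d q ν = f r := fun r ν hν => by
    obtain ⟨V, hV, h⟩ := trL_eq d q _ _ hν
    obtain ⟨W, hW, h'⟩ := heq r
    apply le_antisymm
    · rw [h]; exact trL_le d q hq V _ hV _ (hμ r)
    · rw [h', ← trL_sub]; exact trL_le d q hq W _ hW _ hν
  have hanti : StrictAnti f := fun r s hrs => by
    obtain ⟨V, hV, h⟩ := heq s
    have h1 := hle r V hV
    have h2 := hLB V hV
    rw [h]
    nlinarith
  have hconv : ConvexOn ℝ Set.univ f := by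
    refine ⟨convex_univ, fun x _ y _ a b ha hb hab => ?_⟩
    obtain ⟨V, hV, h⟩ := heq (a • x + b • y)
    have h1 := mul_le_mul_of_nonneg_left (hle x V hV) ha
    have h2 := mul_le_mul_of_nonneg_left (hle y V hV) hb
    rw [h]
    simp only [smul_eq_mul]
    have : trL d q V A = (a + b) * trL d q V A := by rw [hab, one_mul]
    nlinarith
  have hcont : Continuous f := by
    have := hconv.continuousOn_interior
    rwa [interior_univ, continuousOn_univ] at this
  have h0 : 0 ≤ f 0 := by
    obtain ⟨V, hV, h⟩ := heq 0
    rw [h]; simpa using hLA V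
  have hneg : ∃ R, 0 ≤ R ∧ f R ≤ 0 := by
    obtain ⟨ν, hν⟩ := exists_sorted (-B) hB.1.neg
    obtain ⟨V0, hV0, h⟩ := trL_eq d q _ _ hν
    have hc := hLB V0 hV0
    refine ⟨f 0 / trL d q V0 B, div_nonneg h0 hc.le, ?_⟩
    obtain ⟨V, hV, h'⟩ := heq (f 0 / trL d q V0 B)
    have h1 := hle 0 V hV
    have h2 := trL_le d q hq V _ hV _ hν
    rw [h, trL_neg, trL_neg] at h2
    have h3 : f 0 / trL d q V0 B * trL d q V0 B = f 0 := div_mul_cancel₀ _ hc.ne'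
    have h4 : f 0 / trL d q V0 B * trL d q V0 B ≤ f 0 / trL d q V0 B * trL d q V B :=
      mul_le_mul_of_nonneg_left (by linarith) (div_nonneg h0 hc.le)
    rw [h']
    linarith
  obtain ⟨R, hR, hfR⟩ := hneg
  obtain ⟨r, _, hr⟩ := intermediate_value_Icc' hR hcont.continuousOn ⟨hfR, h0⟩
  refine ⟨r, fun ν hν => (huniq r ν hν).trans hr, fun s hs => ?_⟩
  exact hanti.injective ((hs _ (hμ s)).trans hr.symm)
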